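/- arXiv:0903.4162 — 4 statements merged into one kernel-verified Lean document; each statement's English description precedes it below -/
import Mathlib

section
/- For M > 0, λ ≥ 0, and any observed log-image g : Fin m × Fin n → ℝ, the penalized negative log-likelihood L(z) = M·∑_s (z_s + exp(g_s - z_s)) + λ·TV(z) is strictly convex on the space of images z : Fin m × Fin n → ℝ. -/
/-!
The data term is a sum of strictly convex functions, one of each coordinate. Distinct images differ
in some coordinate, where the corresponding summand supplies the strict inequality. Total variation
is a sum of Euclidean norms of linear functions of the image, so adding it preserves strict
convexity.
-/

open scoped BigOperators

/-- The total variation of an image `z : Fin m × Fin n → ℝ`, using first-order horizontal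
and vertical differences with periodic (cyclic) boundary conditions. -/
noncomputable def TV {m n : ℕ} [NeZero m] [NeZero n] (z : Fin m × Fin n → ℝ) : ℝ :=
  ∑ s : Fin m × Fin n,
    Real.sqrt ((z (s.1 + 1, s.2) - z s) ^ 2 + (z (s.1, s.2 + 1) - z s) ^ 2)

section ConvexFunctions

variable {𝕜 E F β ι : Type*}

theorem convexOn_finset_sum [Semiring 𝕜] [PartialOrder 𝕜] [AddCommMonoid E] [SMul 𝕜 E]
    [AddCommMonoid β] [PartialOrder β] [IsOrderedAddMonoid β] [Module 𝕜 β]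
    {s : Set E} {t : Finset ι} {f : ι → E → β} (hs : Convex 𝕜 s)
    (hf : ∀ i ∈ t, ConvexOn 𝕜 s (f i)) : ConvexOn 𝕜 s (fun x => ∑ i ∈ t, f i x) := by
  have h_sum : ConvexOn 𝕜 s (∑ i ∈ t, f i) :=
    Finset.sum_induction f (ConvexOn 𝕜 s) (fun _ _ => ConvexOn.add) (convexOn_const 0 hs) hf
  simpa only [Finset.sum_fn] using h_sum

theorem strictConvexOn_const_smul [CommSemiring 𝕜] [PartialOrder 𝕜] [AddCommMonoid E] [SMul 𝕜 E]
    [AddCommMonoid β] [PartialOrder β] [Module 𝕜 β] [PosSMulStrictMono 𝕜 β]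
    {s : Set E} {f : E → β} {c : 𝕜} (hc : 0 < c) (hf : StrictConvexOn 𝕜 s f) :
    StrictConvexOn 𝕜 s (fun x => c • f x) := by
  refine ⟨hf.1, fun x hx y hy hxy a b ha hb hab => ?_⟩
  calc
    c • f (a • x + b • y) < c • (a • f x + b • f y) :=
      smul_lt_smul_of_pos_left (hf.2 hx hy hxy ha hb hab) hc
    _ = a • c • f x + b • c • f y := by rw [smul_add, smul_comm c a, smul_comm c b]

theorem strictConvexOn_comp_affineMap [Ring 𝕜] [PartialOrder 𝕜] [AddCommGroup E] [Module 𝕜 E]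
    [AddCommGroup F] [Module 𝕜 F] [AddCommMonoid β] [PartialOrder β] [SMul 𝕜 β]
    {s : Set F} {f : F → β} (hf : StrictConvexOn 𝕜 s f) (φ : E →ᵃ[𝕜] F)
    (hφ : Function.Injective φ) : StrictConvexOn 𝕜 (φ ⁻¹' s) (f ∘ φ) := by
  refine ⟨hf.1.affine_preimage φ, fun x hx y hy hxy a b ha hb hab => ?_⟩
  rw [Function.comp_apply, Convex.combo_affine_apply hab]
  exact hf.2 hx hy (hφ.ne hxy) ha hb hab

theorem strictConvexOn_sum_pi [Semiring 𝕜] [PartialOrder 𝕜] [Fintype ι] {G : ι → Type*}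
    [∀ i, AddCommMonoid (G i)] [∀ i, Module 𝕜 (G i)]
    [AddCommMonoid β] [PartialOrder β] [IsOrderedCancelAddMonoid β] [Module 𝕜 β]
    {s : ∀ i, Set (G i)} {f : ∀ i, G i → β} (hf : ∀ i, StrictConvexOn 𝕜 (s i) (f i)) :
    StrictConvexOn 𝕜 (Set.univ.pi s) (fun x => ∑ i, f i (x i)) := by
  refine ⟨convex_pi fun i _ => (hf i).1, fun x hx y hy hxy a b ha hb hab => ?_⟩
  obtain ⟨j, hj⟩ := Function.ne_iff.mp hxy
  have hx' (i : ι) : x i ∈ s i := hx i (Set.mem_univ i)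
  have hy' (i : ι) : y i ∈ s i := hy i (Set.mem_univ i)
  calc
    ∑ i, f i ((a • x + b • y) i) < ∑ i, (a • f i (x i) + b • f i (y i)) :=
      Finset.sum_lt_sum
        (fun i _ => (hf i).convexOn.2 (hx' i) (hy' i) ha.le hb.le hab)
        ⟨j, Finset.mem_univ j, (hf j).2 (hx' j) (hy' j) hj ha hb hab⟩
    _ = a • ∑ i, f i (x i) + b • ∑ i, f i (y i) := by
      rw [Finset.sum_add_distrib, Finset.smul_sum, Finset.smul_sum]

end ConvexFunctions

theorem convexOn_sqrt_sq_add_sq {E : Type*} [AddCommGroup E] [Module ℝ E] (φ ψ : E →ₗ[ℝ] ℝ) :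
    ConvexOn ℝ Set.univ (fun x => Real.sqrt (φ x ^ 2 + ψ x ^ 2)) := by
  have h_norm := (convexOn_univ_norm (E := WithLp 2 (ℝ × ℝ))).comp_linearMap
    ((WithLp.linearEquiv 2 ℝ (ℝ × ℝ)).symm.toLinearMap ∘ₗ φ.prod ψ)
  simpa [Function.comp_def, WithLp.prod_norm_eq_of_L2] using h_norm

theorem convexOn_TV {m n : ℕ} [NeZero m] [NeZero n] :
    ConvexOn ℝ Set.univ (TV : (Fin m × Fin n → ℝ) → ℝ) :=
  let pixel (s : Fin m × Fin n) : (Fin m × Fin n → ℝ) →ₗ[ℝ] ℝ := LinearMap.proj s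
  convexOn_finset_sum convex_univ fun s _ => convexOn_sqrt_sq_add_sq
    (pixel (s.1 + 1, s.2) - pixel s) (pixel (s.1, s.2 + 1) - pixel s)

theorem strictConvexOn_add_exp_sub (c : ℝ) :
    StrictConvexOn ℝ Set.univ (fun t => t + Real.exp (c - t)) :=
  (convexOn_id convex_univ).add_strictConvexOn
    (strictConvexOn_comp_affineMap strictConvexOn_exp
      (AffineEquiv.constVSub ℝ c).toAffineMap (AffineEquiv.constVSub ℝ c).injective)

theorem strictConvexOn_sum_add_exp_sub {ι : Type*} [Fintype ι] (g : ι → ℝ) :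
    StrictConvexOn ℝ Set.univ (fun z : ι → ℝ => ∑ i, (z i + Real.exp (g i - z i))) := by
  simpa only [Set.pi_univ] using
    strictConvexOn_sum_pi fun i => strictConvexOn_add_exp_sub (g i)

/-- For `M > 0`, `λ ≥ 0` and any observed log-image `g`, the penalized negative
log-likelihood `L(z) = M • ∑ s, (z s + exp (g s - z s)) + λ • TV z` is strictly convex. -/
theorem strictConvexOn_penalized_neg_log_likelihood {m n : ℕ} [NeZero m] [NeZero n]
    (M lam : ℝ) (hM : 0 < M) (hlam : 0 ≤ lam) (g : Fin m × Fin n → ℝ) :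
    StrictConvexOn ℝ (Set.univ : Set (Fin m × Fin n → ℝ))
      (fun z => M * ∑ s : Fin m × Fin n, (z s + Real.exp (g s - z s)) + lam * TV z) :=
  (strictConvexOn_const_smul hM (strictConvexOn_sum_add_exp_sub g)).add_convexOn
    (convexOn_TV.smul hlam)
end

section
/- For M > 0, λ ≥ 0, and any observed log-image g : Fin m × Fin n → ℝ, the penalized negative log-likelihood L(z) = M·∑_s (z_s + exp(g_s - z_s)) + λ·TV(z) is coercive: L(z) → +∞ as ‖z‖ → ∞. -/
open scoped BigOperators
open Filter

/-!
The inequality `|t| + t ≤ exp t`, applied at `t = g s - z s` in every pixel `s`, gives the data term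
linear growth, `∑ s, (z s + exp (g s - z s)) ≥ ∑ s, g s + dist g z`, and a penalty that is bounded
below cannot destroy it.
-/

theorem abs_add_self_le_exp (t : ℝ) : |t| + t ≤ Real.exp t := by
  rcases le_total 0 t with ht | ht
  · calc |t| + t = 2 * t := by rw [abs_of_nonneg ht, two_mul]
      _ ≤ Real.exp t := Real.two_mul_le_exp
  · calc |t| + t = 0 := by rw [abs_of_nonpos ht, neg_add_cancel]
      _ ≤ Real.exp t := Real.exp_nonneg t

theorem dist_pi_le_sum_dist {ι : Type*} [Fintype ι] {X : ι → Type*}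
    [∀ i, PseudoMetricSpace (X i)] (x y : ∀ i, X i) : dist x y ≤ ∑ i, dist (x i) (y i) :=
  (dist_pi_le_iff (Finset.sum_nonneg fun _ _ => dist_nonneg)).2 fun i =>
    Finset.single_le_sum (f := fun j => dist (x j) (y j)) (fun _ _ => dist_nonneg)
      (Finset.mem_univ i)

section FiniteIndex

variable {ι : Type*} [Fintype ι]

theorem sum_add_dist_le_sum_add_exp_sub (g z : ι → ℝ) :
    ∑ i, g i + dist g z ≤ ∑ i, (z i + Real.exp (g i - z i)) :=
  calc ∑ i, g i + dist g z
      ≤ ∑ i, g i + ∑ i, dist (g i) (z i) := by gcongr; exact dist_pi_le_sum_dist g z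
    _ = ∑ i, (z i + (|g i - z i| + (g i - z i))) := by
        simp only [← Finset.sum_add_distrib, Real.dist_eq]
        exact Finset.sum_congr rfl fun _ _ => by ring
    _ ≤ ∑ i, (z i + Real.exp (g i - z i)) := by gcongr; exact abs_add_self_le_exp _

theorem tendsto_sum_add_exp_sub_cobounded_atTop (g : ι → ℝ) :
    Tendsto (fun z : ι → ℝ => ∑ i, (z i + Real.exp (g i - z i)))
      (Bornology.cobounded (ι → ℝ)) atTop :=
  tendsto_atTop_mono (sum_add_dist_le_sum_add_exp_sub g) <|
    tendsto_atTop_add_const_left _ _ (Metric.tendsto_dist_left_cobounded_atTop g)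

theorem coercive_penalized_neg_log_likelihood_general {M : ℝ} (hM : 0 < M) (g : ι → ℝ)
    {R : (ι → ℝ) → ℝ} (hR : BddBelow (Set.range R)) :
    Tendsto (fun z : ι → ℝ => M * ∑ i, (z i + Real.exp (g i - z i)) + R z)
      (Bornology.cobounded (ι → ℝ)) atTop := by
  obtain ⟨c, hc⟩ := hR
  exact tendsto_atTop_add_right_of_le _ c
    ((tendsto_sum_add_exp_sub_cobounded_atTop g).const_mul_atTop hM)
    fun z => hc (Set.mem_range_self z)

end FiniteIndex

theorem TV_nonneg {m n : ℕ} [NeZero m] [NeZero n] (z : Fin m × Fin n → ℝ) : 0 ≤ TV z :=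
  Finset.sum_nonneg fun _ _ => Real.sqrt_nonneg _

/-- For `M > 0`, `λ ≥ 0` and any observed log-image `g`, the penalized negative
log-likelihood `L(z) = M • ∑ s, (z s + exp (g s - z s)) + λ • TV z` is coercive:
`L(z) → +∞` as `‖z‖ → ∞`. -/
theorem coercive_penalized_neg_log_likelihood {m n : ℕ} [NeZero m] [NeZero n]
    (M lam : ℝ) (hM : 0 < M) (hlam : 0 ≤ lam) (g : Fin m × Fin n → ℝ) :
    Tendsto
      (fun z : Fin m × Fin n → ℝ =>
        M * ∑ s : Fin m × Fin n, (z s + Real.exp (g s - z s)) + lam * TV z)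
      (Filter.comap (fun z : Fin m × Fin n → ℝ => ‖z‖) atTop) atTop := by
  rw [comap_norm_atTop]
  exact coercive_penalized_neg_log_likelihood_general hM g
    ⟨0, Set.forall_mem_range.2 fun z => mul_nonneg hlam (TV_nonneg z)⟩
end

section
/- Let E : ℝⁿ → ℝ, let A be a real m × n matrix, let b, bᵏ ∈ ℝᵐ, let τ > 0, and set pᵏ = τ·Aᵀ(bᵏ - b). Then the two functions x ↦ E(x) - ⟨pᵏ, x⟩ + (τ/2)·‖A x - b‖² and x ↦ E(x) + (τ/2)·‖A x - bᵏ‖² differ by an additive constant independent of x; in particular they have the same set of minimizers. -/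
open scoped RealInnerProductSpace

lemma norm_sub_sq_sub_two_mul_inner_sub {F : Type*} [SeminormedAddCommGroup F]
    [InnerProductSpace ℝ F] (b c y : F) :
    ‖y - b‖ ^ 2 - 2 * ⟪c - b, y⟫ = ‖y - c‖ ^ 2 + (‖b‖ ^ 2 - ‖c‖ ^ 2) := by
  rw [inner_sub_left, norm_sub_sq_real, norm_sub_sq_real, real_inner_comm b y,
    real_inner_comm c y]
  ring

lemma forall_le_iff_of_eq_add_right {α β : Type*} [Add β] [LE β] [AddRightMono β]
    [AddRightReflectLE β] {f g : α → β} {C : β} (hfg : ∀ x, f x = g x + C) (x₀ : α) :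
    (∀ x, f x₀ ≤ f x) ↔ ∀ x, g x₀ ≤ g x := by
  simp only [hfg, add_le_add_iff_right]

section Hilbert

variable {H K : Type*} [NormedAddCommGroup H] [InnerProductSpace ℝ H] [CompleteSpace H]
  [NormedAddCommGroup K] [InnerProductSpace ℝ K] [CompleteSpace K]

lemma half_mul_norm_sub_sq_sub_inner_smul_adjoint (A : H →L[ℝ] K) (b c : K) (τ : ℝ) (x : H) :
    τ / 2 * ‖A x - b‖ ^ 2 - ⟪τ • ContinuousLinearMap.adjoint A (c - b), x⟫ =
      τ / 2 * ‖A x - c‖ ^ 2 + τ / 2 * (‖b‖ ^ 2 - ‖c‖ ^ 2) :=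
  calc
    _ = τ / 2 * (‖A x - b‖ ^ 2 - 2 * ⟪c - b, A x⟫) := by
      rw [real_inner_smul_left, ContinuousLinearMap.adjoint_inner_left]
      ring
    _ = τ / 2 * (‖A x - c‖ ^ 2 + (‖b‖ ^ 2 - ‖c‖ ^ 2)) := by
      rw [norm_sub_sq_sub_two_mul_inner_sub]
    _ = _ := mul_add _ _ _

theorem bregman_quadratic_equivalence_general (E : H → ℝ) (A : H →L[ℝ] K) (b bk : K) (τ : ℝ)
    (pk : H) (hpk : pk = τ • ContinuousLinearMap.adjoint A (bk - b)) :
    (∃ C : ℝ, ∀ x, E x - ⟪pk, x⟫ + τ / 2 * ‖A x - b‖ ^ 2 =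
        E x + τ / 2 * ‖A x - bk‖ ^ 2 + C) ∧
    (∀ x₀,
        (∀ x, E x₀ - ⟪pk, x₀⟫ + τ / 2 * ‖A x₀ - b‖ ^ 2 ≤
              E x - ⟪pk, x⟫ + τ / 2 * ‖A x - b‖ ^ 2) ↔
        (∀ x, E x₀ + τ / 2 * ‖A x₀ - bk‖ ^ 2 ≤ E x + τ / 2 * ‖A x - bk‖ ^ 2)) := by
  have objective_eq : ∀ x, E x - ⟪pk, x⟫ + τ / 2 * ‖A x - b‖ ^ 2 =
      E x + τ / 2 * ‖A x - bk‖ ^ 2 + τ / 2 * (‖b‖ ^ 2 - ‖bk‖ ^ 2) := by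
    intro x
    rw [hpk]
    linear_combination half_mul_norm_sub_sq_sub_inner_smul_adjoint A b bk τ x
  exact ⟨⟨_, objective_eq⟩, forall_le_iff_of_eq_add_right objective_eq⟩

end Hilbert

/-- For a quadratic penalty `H(x) = (τ/2)‖A x - b‖²` and `pᵏ = τ·Aᵀ(bᵏ - b)`, the functions
`x ↦ E x - ⟪pᵏ, x⟫ + (τ/2)‖A x - b‖²` and `x ↦ E x + (τ/2)‖A x - bᵏ‖²` differ by an
additive constant; in particular they have the same minimizers. -/
theorem bregman_quadratic_equivalence (n m : ℕ)
    (E : EuclideanSpace ℝ (Fin n) → ℝ)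
    (A : EuclideanSpace ℝ (Fin n) →L[ℝ] EuclideanSpace ℝ (Fin m))
    (b bk : EuclideanSpace ℝ (Fin m)) (τ : ℝ) (hτ : 0 < τ)
    (pk : EuclideanSpace ℝ (Fin n)) (hpk : pk = τ • (ContinuousLinearMap.adjoint A) (bk - b)) :
    (∃ C : ℝ, ∀ x : EuclideanSpace ℝ (Fin n),
        E x - ⟪pk, x⟫ + τ / 2 * ‖A x - b‖ ^ 2 = E x + τ / 2 * ‖A x - bk‖ ^ 2 + C) ∧
    (∀ x₀ : EuclideanSpace ℝ (Fin n),
        (∀ x, E x₀ - ⟪pk, x₀⟫ + τ / 2 * ‖A x₀ - b‖ ^ 2 ≤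
              E x - ⟪pk, x⟫ + τ / 2 * ‖A x - b‖ ^ 2) ↔
        (∀ x, E x₀ + τ / 2 * ‖A x₀ - bk‖ ^ 2 ≤ E x + τ / 2 * ‖A x - bk‖ ^ 2)) :=
  bregman_quadratic_equivalence_general E A b bk τ pk hpk
end

section
/- Let E : ℝⁿ → ℝ be convex, let H : ℝⁿ → ℝ be differentiable at x⁺ with gradient ∇H(x⁺), let p ∈ ℝⁿ be a subgradient of E at xᵏ, and suppose x⁺ minimizes the function x ↦ E(x) - E(xᵏ) - ⟨p, x - xᵏ⟩ + H(x) over ℝⁿ. Then p - ∇H(x⁺) is a subgradient of E at x⁺. -/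
open scoped RealInnerProductSpace

section Module

variable {V : Type*} [AddCommGroup V] [Module ℝ V] {s : Set V} {f g : V → ℝ} {a x : V} {g' : ℝ}

-- On the segment from `a` to `x`, replacing `f` by its chord keeps the minimum of `f + g` at `a`,
-- and the resulting function of one variable is differentiable at `0`.
theorem sub_le_of_isMinOn_add_of_hasLineDerivWithinAt (hf : ConvexOn ℝ s f) (ha : a ∈ s)
    (hx : x ∈ s) (hg : HasLineDerivWithinAt ℝ g g' s a (x - a)) (hmin : IsMinOn (f + g) s a) :
    f a - g' ≤ f x := by
  let φ : ℝ → ℝ := fun t ↦ f a + t * (f x - f a) + g (a + t • (x - a))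
  have mem_s : ∀ t ∈ Set.Icc (0 : ℝ) 1, a + t • (x - a) ∈ s := fun _ ht ↦
    hf.1.add_smul_sub_mem ha hx ht
  have φ_min : IsMinOn φ (Set.Icc 0 1) 0 := by
    intro t ht
    have chord : f (a + t • (x - a)) ≤ f a + t * (f x - f a) := by
      have h := hf.2 ha hx (sub_nonneg.2 ht.2) ht.1 (sub_add_cancel 1 t)
      rw [show (1 - t) • a + t • x = a + t • (x - a) by module, smul_eq_mul, smul_eq_mul] at h
      linarith
    calc φ 0 = (f + g) a := by simp [φ]
      _ ≤ (f + g) (a + t • (x - a)) := hmin (mem_s t ht)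
      _ ≤ φ t := add_le_add_left chord _
  have φ_deriv : HasDerivWithinAt φ (f x - f a + g') (Set.Icc 0 1) 0 :=
    ((hasDerivAt_mul_const (f x - f a)).const_add (f a)).hasDerivWithinAt.add
      (HasDerivWithinAt.mono hg mem_s)
  have one_mem_cone : (1 : ℝ) ∈ posTangentConeAt (Set.Icc 0 1) 0 :=
    mem_posTangentConeAt_of_segment_subset (by rw [zero_add, segment_eq_Icc zero_le_one])
  have : 0 ≤ f x - f a + g' := by
    simpa using φ_min.localize.hasFDerivWithinAt_nonneg φ_deriv.hasFDerivWithinAt one_mem_cone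
  linarith

end Module

section Normed

variable {V : Type*} [NormedAddCommGroup V] [NormedSpace ℝ V] {s : Set V} {f g : V → ℝ}
  {p q : StrongDual ℝ V} {a y : V}

/-- The functional `p` is a subgradient at `a` of the extended-real-valued function that is `f` on
`s` and `+∞` off `s`; there is none at points outside `s`. -/
def IsSubgradientWithinAt (f : V → ℝ) (s : Set V) (p : StrongDual ℝ V) (a : V) : Prop :=
  a ∈ s ∧ ∀ x ∈ s, f a + p (x - a) ≤ f x

/-- The Bregman divergence `D_f^p(x, y)`. It is defined for every functional `p`; in the Bregman
iteration `p` is a subgradient of `f` at `y`. -/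
def bregmanDiv (f : V → ℝ) (p : StrongDual ℝ V) (x y : V) : ℝ :=
  f x - f y - p (x - y)

theorem convexOn_bregmanDiv (hf : ConvexOn ℝ s f) (p : StrongDual ℝ V) (y : V) :
    ConvexOn ℝ s (bregmanDiv f p · y) := by
  have h := (hf.sub (p.toLinearMap.concaveOn hf.1)).add_const (p y - f y)
  refine h.congr fun x _ ↦ ?_
  simp only [bregmanDiv, Pi.add_apply, Pi.sub_apply, map_sub, ContinuousLinearMap.coe_coe]
  ring

theorem isSubgradientWithinAt_bregmanDiv_iff :
    IsSubgradientWithinAt (bregmanDiv f p · y) s q a ↔ IsSubgradientWithinAt f s (p + q) a := by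
  refine and_congr_right' <| forall₂_congr fun x _ ↦ ?_
  simp only [bregmanDiv, add_apply, map_sub]
  constructor <;> intro h <;> linarith

theorem isSubgradientWithinAt_neg_of_isMinOn_add {g' : StrongDual ℝ V} (hf : ConvexOn ℝ s f)
    (ha : a ∈ s) (hg : HasFDerivWithinAt g g' s a) (hmin : IsMinOn (f + g) s a) :
    IsSubgradientWithinAt f s (-g') a := by
  refine ⟨ha, fun x hx ↦ ?_⟩
  simpa only [neg_apply, sub_eq_add_neg] using
    sub_le_of_isMinOn_add_of_hasLineDerivWithinAt hf ha hx (hg.hasLineDerivWithinAt (x - a)) hmin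

theorem bregman_subgradient_update_general {E H : V → ℝ} {H' : StrongDual ℝ V} {xk xplus : V}
    (hE : ConvexOn ℝ s E) (hxplus : xplus ∈ s) (hH : HasFDerivWithinAt H H' s xplus)
    (hmin : IsMinOn (fun x ↦ bregmanDiv E p x xk + H x) s xplus) :
    IsSubgradientWithinAt E s (p - H') xplus := by
  rw [sub_eq_add_neg, ← isSubgradientWithinAt_bregmanDiv_iff (y := xk)]
  exact isSubgradientWithinAt_neg_of_isMinOn_add (convexOn_bregmanDiv hE p xk) hxplus hH hmin

end Normed

/-- If `E` is convex, `p` is a subgradient of `E` at `xᵏ`, `H` has gradient `gH` at `x⁺`,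
and `x⁺` minimizes the Bregman-penalized objective `x ↦ E x - E xᵏ - ⟪p, x - xᵏ⟫ + H x`,
then `p - gH` is a subgradient of `E` at `x⁺`. -/
theorem bregman_subgradient_update (n : ℕ)
    (E H : EuclideanSpace ℝ (Fin n) → ℝ)
    (hE : ConvexOn ℝ Set.univ E)
    (xk xplus : EuclideanSpace ℝ (Fin n))
    (p gH : EuclideanSpace ℝ (Fin n))
    (hp : ∀ x : EuclideanSpace ℝ (Fin n), E xk + ⟪p, x - xk⟫ ≤ E x)
    (hH : HasGradientAt H gH xplus)
    (hmin : ∀ x : EuclideanSpace ℝ (Fin n),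
        E xplus - E xk - ⟪p, xplus - xk⟫ + H xplus ≤ E x - E xk - ⟪p, x - xk⟫ + H x) :
    ∀ x : EuclideanSpace ℝ (Fin n), E xplus + ⟪p - gH, x - xplus⟫ ≤ E x := by
  intro x
  simpa only [sub_apply, InnerProductSpace.toDual_apply_apply, inner_sub_left] using
    (bregman_subgradient_update_general (p := InnerProductSpace.toDual ℝ _ p) hE trivial
      hH.hasFDerivAt.hasFDerivWithinAt fun y _ ↦ hmin y).2 x trivial
end
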